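/- arXiv:2104.12645 — 5 statements merged into one kernel-verified Lean document; each statement's English description precedes it below -/
import Mathlib

section
/- Let f : X → Y be a quasi-compact morphism of schemes and let π be a global section of O_Y. If f is a v-covering, then f is a π-complete arc-covering. -/
/-!
STATEMENT 0: Let `f : X → Y` be a quasi-compact morphism of schemes and let `π` be a global
section of `O_Y`.  If `f` is a v-covering, then `f` is a `π`-complete arc-covering.
-/

open AlgebraicGeometry CategoryTheory Opposite

universe u

/-- A bundled valuation ring. -/
structure ValRing : Type (u + 1) where
  carrier : Type u
  [commRing : CommRing carrier]
  [isDomain : IsDomain carrier]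
  [valuationRing : ValuationRing carrier]

attribute [instance] ValRing.commRing ValRing.isDomain ValRing.valuationRing

instance : CoeSort ValRing.{u} (Type u) := ⟨ValRing.carrier⟩

/-- The image of a global section `π` of `O_Y` in `V` under a morphism `Spec V ⟶ Y`. -/
noncomputable def sectionPullback {Y : Scheme.{u}} (π : Γ(Y, ⊤)) {V : Type u} [CommRing V]
    (g : Spec (CommRingCat.of V) ⟶ Y) : V :=
  (Scheme.ΓSpecIso (CommRingCat.of V)).hom (g.appTop π)

/-- A quasi-compact morphism of schemes `f : X ⟶ Y` is a v-covering if for every valuation ring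
`V` and every morphism `Spec V ⟶ Y` there exist an extension of valuation rings `V → W`
(an injective local ring homomorphism of valuation rings) and a lift `Spec W ⟶ X`. -/
def IsVCovering {X Y : Scheme.{u}} (f : X ⟶ Y) : Prop :=
  ∀ (V : ValRing.{u}) (g : Spec (CommRingCat.of V.carrier) ⟶ Y),
    ∃ (W : ValRing.{u}) (ι : V.carrier →+* W.carrier)
      (h : Spec (CommRingCat.of W.carrier) ⟶ X),
        Function.Injective ι ∧ IsLocalHom ι ∧
          h ≫ f = Spec.map (CommRingCat.ofHom ι) ≫ g

/-- A quasi-compact morphism of schemes `f : X ⟶ Y` together with `π ∈ Γ(Y, O_Y)` is a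
`π`-complete arc-covering if for every `π`-adically complete valuation ring `V` of Krull
dimension at most `1` and every morphism `Spec V ⟶ Y` there exist an extension of
`π`-adically complete valuation rings `V → W` of Krull dimension at most `1` and a lift
`Spec W ⟶ X`. -/
def IsPiCompleteArcCovering {X Y : Scheme.{u}} (f : X ⟶ Y) (π : Γ(Y, ⊤)) : Prop :=
  ∀ (V : ValRing.{u}) (g : Spec (CommRingCat.of V.carrier) ⟶ Y),
    ringKrullDim V.carrier ≤ 1 →
    IsAdicComplete (Ideal.span {sectionPullback π g}) V.carrier →
    ∃ (W : ValRing.{u}) (ι : V.carrier →+* W.carrier)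
      (h : Spec (CommRingCat.of W.carrier) ⟶ X),
        ringKrullDim W.carrier ≤ 1 ∧
        IsAdicComplete (Ideal.span {ι (sectionPullback π g)}) W.carrier ∧
        Function.Injective ι ∧ IsLocalHom ι ∧
          h ≫ f = Spec.map (CommRingCat.ofHom ι) ≫ g

/-!
Let `t` be the image of `π` in `V`; completeness makes it a nonunit. A v-lift gives an extension
`V → W` of valuation rings, possibly of large rank. For a nonzero nonunit `s` of `W`, localizing at
a minimal prime over `s` and then completing `s`-adically cuts out the part of `W` of rank one
around `s`: localization removes the primes above the minimal one, and completion kills the primes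
not containing `s`, the largest of which is `⋂ sⁿW`. Up to a unit every element of the completion
comes from the localization, so the completion is again a valuation ring.

With `s = t` if `t ≠ 0`, the composite from `V` stays injective and local, because a domain of
dimension at most one has no primes other than `0` and the maximal ideal. If `t = 0`, then
`t`-completeness is vacuous and any nonzero nonunit of `V` serves as `s`; if there is none, `V` is
a field and the fraction field of `W` will do.
-/

section Hausdorff

variable {R : Type*} [CommRing R] {s : R}

lemma exists_not_pow_dvd_of_ne_zero [IsHausdorff (Ideal.span {s}) R] {x : R} (hx : x ≠ 0) :
    ∃ n : ℕ, ¬ s ^ n ∣ x := by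
  by_contra! hdvd
  refine hx (IsHausdorff.haus ‹_› x fun n ↦ ?_)
  rw [SModEq.zero, Ideal.span_singleton_pow, smul_eq_mul, Ideal.mul_top,
    Ideal.mem_span_singleton]
  exact hdvd n

lemma exists_dvd_pow_of_ne_zero [PreValuationRing R] [IsHausdorff (Ideal.span {s}) R] {x : R}
    (hx : x ≠ 0) : ∃ n : ℕ, x ∣ s ^ n :=
  (exists_not_pow_dvd_of_ne_zero hx).imp fun n hn ↦
    (ValuationRing.dvd_total (s ^ n) x).resolve_left hn

lemma isDomain_of_isHausdorff_of_not_isNilpotent [PreValuationRing R]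
    [IsHausdorff (Ideal.span {s}) R] (hs : ¬ IsNilpotent s) : IsDomain R := by
  have : Nontrivial R := ⟨s, 0, fun h ↦ hs (h ▸ IsNilpotent.zero)⟩
  have : NoZeroDivisors R := ⟨fun {x y} hxy ↦ by
    by_contra! hne
    obtain ⟨i, hi⟩ := exists_dvd_pow_of_ne_zero (s := s) hne.1
    obtain ⟨j, hj⟩ := exists_dvd_pow_of_ne_zero (s := s) hne.2
    exact hs ⟨i + j, zero_dvd_iff.1 (by simpa only [hxy, pow_add] using mul_dvd_mul hi hj)⟩⟩
  exact NoZeroDivisors.to_isDomain R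

lemma not_isUnit_of_isHausdorff_span_singleton [Nontrivial R]
    (h : IsHausdorff (Ideal.span {s}) R) : ¬ IsUnit s := by
  intro hs
  rw [Ideal.span_singleton_eq_top.2 hs] at h
  exact not_subsingleton R h.subsingleton

lemma krullDimLE_one_of_maximalIdeal_le_radical [IsDomain R] [ValuationRing R]
    [IsHausdorff (Ideal.span {s}) R]
    (hs : IsLocalRing.maximalIdeal R ≤ (Ideal.span {s}).radical) : Ring.KrullDimLE 1 R := by
  refine Ring.KrullDimLE.mk₁' fun P hP hprime ↦ ?_
  obtain ⟨y, hyP, hy0⟩ := Submodule.exists_mem_ne_zero_of_ne_bot hP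
  obtain ⟨n, hn⟩ := exists_dvd_pow_of_ne_zero (s := s) hy0
  have hsP : s ∈ P := hprime.mem_of_pow_mem n (P.mem_of_dvd hn hyP)
  have hmax : IsLocalRing.maximalIdeal R ≤ P :=
    hs.trans (hprime.radical_le_iff.2 ((Ideal.span_singleton_le_iff_mem P).2 hsP))
  rw [← (IsLocalRing.maximalIdeal.isMaximal R).eq_of_le hprime.ne_top hmax]
  exact IsLocalRing.maximalIdeal.isMaximal R

end Hausdorff

section Associated

variable {A B : Type*} [CommRing A] [CommRing B] {φ : A →+* B}

lemma preValuationRing_of_forall_exists_associated [PreValuationRing A]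
    (hφ : ∀ x, ∃ a, Associated (φ a) x) : PreValuationRing B := by
  rw [PreValuationRing.iff_dvd_total]
  refine ⟨fun x y ↦ ?_⟩
  obtain ⟨a, ha⟩ := hφ x
  obtain ⟨b, hb⟩ := hφ y
  rw [← ha.dvd_iff_dvd_left, ← hb.dvd_iff_dvd_right, ← hb.dvd_iff_dvd_left,
    ← ha.dvd_iff_dvd_right]
  exact (ValuationRing.dvd_total a b).imp (map_dvd φ) (map_dvd φ)

lemma maximalIdeal_le_radical_map_of_forall_exists_associated [IsLocalRing A] [IsLocalRing B]
    (hφ : ∀ x, ∃ a, Associated (φ a) x) {I : Ideal A}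
    (hI : IsLocalRing.maximalIdeal A ≤ I.radical) :
    IsLocalRing.maximalIdeal B ≤ (I.map φ).radical := by
  intro x hx
  obtain ⟨a, ha⟩ := hφ x
  have ha_mem : a ∈ IsLocalRing.maximalIdeal A := fun h ↦ hx (ha.isUnit (h.map φ))
  exact ((I.map φ).radical).mem_of_dvd ha.dvd
    (Ideal.map_radical_le φ (Ideal.mem_map_of_mem φ (hI ha_mem)))

end Associated

lemma preValuationRing_of_isLocalization {A S : Type*} [CommRing A] [CommRing S] [Algebra A S]
    (M : Submonoid A) [IsLocalization M S] [PreValuationRing A] : PreValuationRing S := by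
  refine preValuationRing_of_forall_exists_associated (φ := algebraMap A S) fun x ↦ ?_
  obtain ⟨⟨a, m⟩, ham⟩ := IsLocalization.surj M x
  exact ⟨a, ham ▸ associated_mul_unit_left x _ (IsLocalization.map_units S m)⟩

section AdicCompletion

variable {A : Type*} [CommRing A]

lemma exists_eq_algebraMap_add_pow_mul (s : A) (n : ℕ)
    (x : AdicCompletion (Ideal.span {s}) A) :
    ∃ a y, x = algebraMap A _ a + algebraMap A _ s ^ n * y := by
  obtain ⟨a, ha⟩ := Submodule.mkQ_surjective _ (AdicCompletion.eval (Ideal.span {s}) A n x)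
  have hker : x - algebraMap A _ a ∈ (AdicCompletion.eval (Ideal.span {s}) A n).ker := by
    rw [LinearMap.mem_ker, map_sub, ← ha, sub_eq_zero]
    rfl
  rw [← AdicCompletion.pow_smul_top_eq_ker_eval (Submodule.fg_span_singleton s),
    Ideal.span_singleton_pow, Submodule.ideal_span_singleton_smul,
    Submodule.mem_smul_pointwise_iff_exists] at hker
  obtain ⟨y, -, hy⟩ := hker
  refine ⟨a, y, ?_⟩
  rw [← map_pow, ← Algebra.smul_def, hy, add_sub_cancel]

instance isAdicComplete_span_algebraMap (s : A) :
    IsAdicComplete (Ideal.span {algebraMap A (AdicCompletion (Ideal.span {s}) A) s})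
      (AdicCompletion (Ideal.span {s}) A) := by
  rw [← Set.image_singleton, ← Ideal.map_span]
  exact AdicCompletion.isAdicComplete_self _ (Submodule.fg_span_singleton s)

lemma exists_associated_algebraMap_adicCompletion [PreValuationRing A] (s : A)
    (x : AdicCompletion (Ideal.span {s}) A) : ∃ a, Associated (algebraMap A _ a) x := by
  obtain rfl | hx := eq_or_ne x 0
  · exact ⟨0, by rw [map_zero]⟩
  let σ := algebraMap A (AdicCompletion (Ideal.span {s}) A) s
  obtain ⟨n, hn⟩ := exists_not_pow_dvd_of_ne_zero (s := σ) hx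
  obtain ⟨a, y, hxy⟩ := exists_eq_algebraMap_add_pow_mul s (n + 1) x
  have hna : ¬ s ^ n ∣ a := by
    intro h
    have hσa : σ ^ n ∣ algebraMap A _ a := by
      rw [← map_pow]
      exact map_dvd _ h
    exact hn (hxy ▸ dvd_add hσa ((pow_dvd_pow σ n.le_succ).mul_right y))
  obtain ⟨b, hb⟩ := (ValuationRing.dvd_total (s ^ n) a).resolve_left hna
  have hunit : IsUnit (σ * (algebraMap A _ b * y) + 1) :=
    Ideal.mem_jacobson_bot.1 (IsAdicComplete.le_jacobson_bot (Ideal.span {σ})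
      (Ideal.mem_span_singleton_self σ)) _
  have hfactor : x = algebraMap A _ a * (σ * (algebraMap A _ b * y) + 1) := by
    have hpow : σ ^ n = algebraMap A _ a * algebraMap A _ b := by rw [← map_mul, ← hb, map_pow]
    rw [hxy, pow_succ, hpow]
    ring
  exact ⟨a, hfactor ▸ associated_mul_unit_right _ _ hunit⟩

lemma not_isNilpotent_algebraMap_adicCompletion [IsDomain A] {s : A} (hs0 : s ≠ 0)
    (hs : ¬ IsUnit s) : ¬ IsNilpotent (algebraMap A (AdicCompletion (Ideal.span {s}) A) s) := by
  rintro ⟨n, hn⟩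
  rw [← map_pow] at hn
  have heval := congrArg (AdicCompletion.evalₐ (Ideal.span {s}) (n + 1)) hn
  rw [AlgHom.commutes, map_zero, Ideal.Quotient.algebraMap_eq, Ideal.Quotient.eq_zero_iff_mem,
    Ideal.span_singleton_pow, Ideal.mem_span_singleton, pow_dvd_pow_iff hs0 hs] at heval
  omega

end AdicCompletion

lemma exists_krullDimLE_one_isAdicComplete_of_maximalIdeal_le_radical (A : Type u) [CommRing A]
    [IsDomain A] [ValuationRing A] {s : A} (hs0 : s ≠ 0) (hs : ¬ IsUnit s)
    (hrad : IsLocalRing.maximalIdeal A ≤ (Ideal.span {s}).radical) :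
    ∃ (B : ValRing.{u}) (φ : A →+* B), Ring.KrullDimLE 1 B ∧
      IsAdicComplete (Ideal.span {φ s}) B ∧ φ s ≠ 0 ∧ ¬ IsUnit (φ s) := by
  let B := AdicCompletion (Ideal.span {s}) A
  let σ : B := algebraMap A B s
  have hσ : ¬ IsNilpotent σ := not_isNilpotent_algebraMap_adicCompletion hs0 hs
  have : PreValuationRing B := preValuationRing_of_forall_exists_associated
    (exists_associated_algebraMap_adicCompletion s)
  have : IsDomain B := isDomain_of_isHausdorff_of_not_isNilpotent hσ
  have : ValuationRing B := .mk
  have hradB : IsLocalRing.maximalIdeal B ≤ (Ideal.span {σ}).radical := by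
    rw [← Set.image_singleton, ← Ideal.map_span]
    exact maximalIdeal_le_radical_map_of_forall_exists_associated
      (exists_associated_algebraMap_adicCompletion s) hrad
  have hσ0 : σ ≠ 0 := fun h ↦ hσ ⟨1, (pow_one σ).trans h⟩
  have hcomplete : IsAdicComplete (Ideal.span {σ}) B := isAdicComplete_span_algebraMap s
  exact ⟨⟨B⟩, algebraMap A B, krullDimLE_one_of_maximalIdeal_le_radical hradB, hcomplete, hσ0,
    not_isUnit_of_isHausdorff_span_singleton hcomplete.toIsHausdorff⟩

lemma exists_krullDimLE_one_isAdicComplete (W : Type u) [CommRing W] [IsDomain W]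
    [ValuationRing W] {s : W} (hs0 : s ≠ 0) (hs : ¬ IsUnit s) :
    ∃ (B : ValRing.{u}) (φ : W →+* B), Ring.KrullDimLE 1 B ∧
      IsAdicComplete (Ideal.span {φ s}) B ∧ φ s ≠ 0 ∧ ¬ IsUnit (φ s) := by
  obtain ⟨q, hq⟩ := Ideal.nonempty_minimalPrimes (mt Ideal.span_singleton_eq_top.1 hs)
  have : q.IsPrime := hq.isPrime
  have hsq : s ∈ q := hq.1.2 (Ideal.mem_span_singleton_self s)
  let A := Localization.AtPrime q
  have : IsDomain A := IsLocalization.isDomain_localization q.primeCompl_le_nonZeroDivisors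
  have : PreValuationRing A := preValuationRing_of_isLocalization q.primeCompl
  have : ValuationRing A := .mk
  have hrad : IsLocalRing.maximalIdeal A ≤ (Ideal.span {algebraMap W A s}).radical := by
    rw [← IsLocalization.AtPrime.map_eq_maximalIdeal q A,
      ← IsLocalization.AtPrime.radical_map_of_mem_minimalPrimes A q _ hq, Ideal.map_span,
      Set.image_singleton]
  have hsA0 : algebraMap W A s ≠ 0 := by
    rwa [Ne, IsLocalization.to_map_eq_zero_iff A q.primeCompl_le_nonZeroDivisors]
  have hsA : ¬ IsUnit (algebraMap W A s) := by
    rw [IsLocalization.AtPrime.isUnit_to_map_iff A q]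
    exact fun h ↦ h hsq
  obtain ⟨B, φ, h⟩ :=
    exists_krullDimLE_one_isAdicComplete_of_maximalIdeal_le_radical A hsA0 hsA hrad
  exact ⟨B, φ.comp (algebraMap W A), h⟩

section KrullDimLEOne

variable {V B : Type*} [CommRing V] [IsDomain V] [IsLocalRing V] [Ring.KrullDimLE 1 V]
  [CommRing B] {ψ : V →+* B} {m : V}

lemma injective_of_map_ne_zero [IsDomain B] (hm : ¬ IsUnit m) (hψm : ψ m ≠ 0) :
    Function.Injective ψ := by
  rw [RingHom.injective_iff_ker_eq_bot]
  by_contra hker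
  have hmax := IsLocalRing.eq_maximalIdeal ((RingHom.ker_isPrime ψ).isMaximal_of_ne_bot hker)
  have hm_mem : m ∈ RingHom.ker ψ := hmax ▸ hm
  exact hψm hm_mem

lemma isLocalHom_of_not_isUnit_map [IsLocalRing B] (hm : m ≠ 0) (hψm : ¬ IsUnit (ψ m)) :
    IsLocalHom ψ := by
  have hm_mem : m ∈ (IsLocalRing.maximalIdeal B).comap ψ := hψm
  have hprime : ((IsLocalRing.maximalIdeal B).comap ψ).IsPrime := inferInstance
  have hne : (IsLocalRing.maximalIdeal B).comap ψ ≠ ⊥ := (Submodule.ne_bot_iff _).2 ⟨m, hm_mem, hm⟩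
  exact ((IsLocalRing.local_hom_TFAE ψ).out 4 0).1
    (IsLocalRing.eq_maximalIdeal (hprime.isMaximal_of_ne_bot hne))

end KrullDimLEOne

section Extension

variable {V : Type*} [CommRing V] {W : Type u} [CommRing W] [IsDomain W]
  {ι : V →+* W} {t : V}

lemma exists_isAdicComplete_extension_of_isField (hV : IsField V) (ht : ¬ IsUnit t) :
    ∃ (B : ValRing.{u}) (φ : W →+* B), Ring.KrullDimLE 1 B ∧
      IsAdicComplete (Ideal.span {φ (ι t)}) B ∧ Function.Injective (φ.comp ι) ∧
      IsLocalHom (φ.comp ι) := by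
  let := hV.toField
  obtain rfl : t = 0 := by simpa using ht
  refine ⟨⟨FractionRing W⟩, algebraMap W (FractionRing W), ?_, ?_, RingHom.injective _, ?_⟩
  · change Ring.KrullDimLE 1 (FractionRing W)
    infer_instance
  · rw [map_zero, map_zero, Ideal.span_singleton_zero]
    infer_instance
  · infer_instance

lemma exists_isAdicComplete_extension [IsDomain V] [IsLocalRing V] [Ring.KrullDimLE 1 V]
    [ValuationRing W] (hι : Function.Injective ι) [IsLocalHom ι] (ht : ¬ IsUnit t) :
    ∃ (B : ValRing.{u}) (φ : W →+* B), Ring.KrullDimLE 1 B ∧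
      IsAdicComplete (Ideal.span {φ (ι t)}) B ∧ Function.Injective (φ.comp ι) ∧
      IsLocalHom (φ.comp ι) := by
  by_cases hV : IsField V
  · exact exists_isAdicComplete_extension_of_isField hV ht
  obtain ⟨m, hm0, hm, htm⟩ : ∃ m : V, m ≠ 0 ∧ ¬ IsUnit m ∧ (t = 0 ∨ t = m) := by
    obtain ht0 | ht0 := eq_or_ne t 0
    · obtain ⟨m, hm0, hm⟩ := Ring.exists_not_isUnit_of_not_isField hV
      exact ⟨m, hm0, hm, .inl ht0⟩
    · exact ⟨t, ht0, ht, .inr rfl⟩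
  obtain ⟨B, φ, hdim, hcomplete, hφ0, hφ⟩ := exists_krullDimLE_one_isAdicComplete W
    ((map_ne_zero_iff ι hι).2 hm0) (mt (isUnit_of_map_unit ι m) hm)
  refine ⟨B, φ, hdim, ?_, injective_of_map_ne_zero hm hφ0, isLocalHom_of_not_isUnit_map hm0 hφ⟩
  obtain rfl | rfl := htm
  · rw [map_zero, map_zero, Ideal.span_singleton_zero]
    infer_instance
  · exact hcomplete

end Extension

theorem isPiCompleteArcCovering_of_isVCovering_general {X Y : Scheme.{u}} (f : X ⟶ Y)
    (π : Γ(Y, ⊤)) (hf : IsVCovering f) (V : ValRing.{u})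
    (g : Spec (CommRingCat.of V.carrier) ⟶ Y) (hdim : ringKrullDim V.carrier ≤ 1)
    (hπ : ¬ IsUnit (sectionPullback π g)) :
    ∃ (W : ValRing.{u}) (ι : V.carrier →+* W.carrier)
      (h : Spec (CommRingCat.of W.carrier) ⟶ X),
        ringKrullDim W.carrier ≤ 1 ∧
        IsAdicComplete (Ideal.span {ι (sectionPullback π g)}) W.carrier ∧
        Function.Injective ι ∧ IsLocalHom ι ∧
          h ≫ f = Spec.map (CommRingCat.ofHom ι) ≫ g := by
  obtain ⟨W, ι, h, hι, _, hlift⟩ := hf V g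
  have : Ring.KrullDimLE 1 V.carrier := Ring.krullDimLE_iff.2 (mod_cast hdim)
  obtain ⟨B, φ, hdimB, hcomplete, hinj, hlocal⟩ := exists_isAdicComplete_extension hι hπ
  refine ⟨B, φ.comp ι, Spec.map (CommRingCat.ofHom φ) ≫ h, mod_cast Ring.krullDimLE_iff.1 hdimB,
    hcomplete, hinj, hlocal, ?_⟩
  rw [Category.assoc, hlift, CommRingCat.ofHom_comp, Spec.map_comp, Category.assoc]

/-- If a quasi-compact morphism of schemes is a v-covering, then it is a `π`-complete
arc-covering for any global section `π` of the base. -/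
theorem isPiCompleteArcCovering_of_isVCovering {X Y : Scheme.{u}} (f : X ⟶ Y)
    [QuasiCompact f] (π : Γ(Y, ⊤)) (hf : IsVCovering f) :
    IsPiCompleteArcCovering f π :=
  fun V g hdim hcomplete ↦ isPiCompleteArcCovering_of_isVCovering_general f π hf V g hdim
    (not_isUnit_of_isHausdorff_span_singleton hcomplete.toIsHausdorff)
end

section
/- Let V be a valuation ring and p ⊆ V a prime ideal. Then the extension of p to the localization V_p coincides with p, i.e. p·V_p = p (under the canonical map V → V_p); equivalently, the sequence of V-modules 0 → V → (V/p) ⊕ V_p → V_p/pV_p → 0 is exact, where the first map sends a to (a mod p, a/1) and the second map sends (a, b) to the difference of the images of a and b in V_p/pV_p. -/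
/-!
STATEMENT 4: Let `V` be a valuation ring and `p ⊆ V` a prime ideal.  Then the extension of
`p` to the localization `V_p` coincides (as a subset of `V_p`) with the image of `p` under the
canonical map `V → V_p`, i.e. `p·V_p = p`.
-/

universe u

/-!
No element of `p` divides an element `s ∉ p`; as divisibility is total, `s` divides every element
of `p`, and by primality the quotient is again in `p`. Hence `p = s p`: dividing by denominators
outside `p` does not enlarge the image of `p`.
-/

section DividedIdeals

variable {R : Type*} [CommSemiring R]

theorem ideal_le_span_singleton_of_notMem [PreValuationRing R] {I : Ideal R} {s : R}
    (hs : s ∉ I) : I ≤ Ideal.span {s} := fun a ha ↦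
  Ideal.mem_span_singleton.mpr <|
    (ValuationRing.dvd_total s a).resolve_right fun has ↦ hs (I.mem_of_dvd has ha)

theorem prime_le_span_singleton_mul_self {p : Ideal R} [hp : p.IsPrime] {s : R}
    (hs : s ∉ p) (hle : p ≤ Ideal.span {s}) : p ≤ Ideal.span {s} * p := by
  refine Ideal.le_span_singleton_mul_iff.mpr fun a ha ↦ ?_
  obtain ⟨c, rfl⟩ := Ideal.mem_span_singleton.mp (hle ha)
  exact ⟨c, (hp.mem_or_mem ha).resolve_left hs, rfl⟩

end DividedIdeals

section Localization

variable {R : Type*} [CommSemiring R] (M : Submonoid R)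
  (S : Type*) [CommSemiring S] [Algebra R S] [IsLocalization M S]

theorem coe_map_algebraMap_eq_image_of_le_span_singleton_mul {I : Ideal R}
    (hI : ∀ s ∈ M, I ≤ Ideal.span {s} * I) :
    (I.map (algebraMap R S) : Set S) = algebraMap R S '' I := by
  refine Set.Subset.antisymm (fun x hx ↦ ?_) (Set.image_subset_iff.mpr Ideal.le_comap_map)
  obtain ⟨⟨⟨a, ha⟩, s⟩, hxs⟩ := (IsLocalization.mem_map_algebraMap_iff M S).mp hx
  obtain ⟨c, hc, rfl⟩ := Ideal.le_span_singleton_mul_iff.mp (hI s s.2) a ha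
  refine ⟨c, hc, (IsLocalization.map_units S s).mul_right_cancel ?_⟩
  rw [hxs, map_mul, mul_comm]

theorem valuationRing_prime_extension_eq_image_general [PreValuationRing R]
    (p : Ideal R) [p.IsPrime] (hM : M ≤ p.primeCompl) :
    (p.map (algebraMap R S) : Set S) = algebraMap R S '' p :=
  coe_map_algebraMap_eq_image_of_le_span_singleton_mul M S fun _ hs ↦
    prime_le_span_singleton_mul_self (hM hs) (ideal_le_span_singleton_of_notMem (hM hs))

end Localization

theorem valuationRing_prime_extension_eq_image
    (V : Type u) [CommRing V] [IsDomain V] [ValuationRing V]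
    (p : Ideal V) [hp : p.IsPrime] :
    ((p.map (algebraMap V (Localization.AtPrime p)) : Ideal (Localization.AtPrime p)) :
        Set (Localization.AtPrime p))
      = (algebraMap V (Localization.AtPrime p)) '' (p : Set V) :=
  valuationRing_prime_extension_eq_image_general p.primeCompl (Localization.AtPrime p) p le_rfl
end

section
/- Let R be a commutative ring, π ∈ R a nonzerodivisor, R̂ the π-adic completion of R, and φ : R[1/π] → R̂[1/π] the canonical ring homomorphism. Then for every integer n, φ⁻¹(π^n R̂) = π^n R, where π^n R and π^n R̂ denote the respective R- (resp. R̂-) submodules π^n·R ⊆ R[1/π] and π^n·R̂ ⊆ R̂[1/π]. -/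
/-!
STATEMENT 11: Let `R` be a commutative ring, `π` a nonzerodivisor, `R̂` the `π`-adic
completion, and `φ : R[1/π] → R̂[1/π]` the canonical homomorphism.  Then for every integer
`n`, `φ⁻¹(πⁿR̂) = πⁿR` (as subsets of the respective localizations, where `πⁿ` is taken with
respect to the invertible image of `π`).
-/

universe u

/-!
Multiplication by the unit `πⁿ` commutes with `φ`, so it suffices to show `φ⁻¹(R̂) = R`, the case
`n = 0`. There, `φ(a / πᵏ) ∈ R̂` means that `πᵐ⁺ᵏ` divides `πᵐ a` in `R̂` for some `m`. Since
`R → R ⧸ πᵐ⁺ᵏ` factors through `R̂`, the same divisibility holds in `R`, so `a / πᵏ ∈ R`.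
-/

section Completion

variable {R : Type*} [CommRing R]

theorem comap_map_pow_adicCompletion (I : Ideal R) (k : ℕ) :
    ((I ^ k).map (algebraMap R (AdicCompletion I R))).comap (algebraMap R (AdicCompletion I R)) =
      I ^ k := by
  refine le_antisymm (fun a ha ↦ ?_) Ideal.le_comap_map
  have map_le_ker : (I ^ k).map (algebraMap R (AdicCompletion I R)) ≤
      RingHom.ker (AdicCompletion.evalₐ I k) :=
    Ideal.map_le_iff_le_comap.2 fun b hb ↦ by
      rw [Ideal.mem_comap, RingHom.mem_ker, AlgHom.commutes]
      exact Ideal.Quotient.eq_zero_iff_mem.2 hb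
  have eval_eq_zero : AdicCompletion.evalₐ I k (algebraMap R _ a) = 0 := map_le_ker ha
  rw [AlgHom.commutes] at eval_eq_zero
  exact Ideal.Quotient.eq_zero_iff_mem.1 eval_eq_zero

theorem pow_dvd_of_algebraMap_adicCompletion_dvd {π a : R} {k : ℕ}
    (h : algebraMap R (AdicCompletion (Ideal.span {π}) R) (π ^ k) ∣
      algebraMap R (AdicCompletion (Ideal.span {π}) R) a) :
    π ^ k ∣ a := by
  rw [← Ideal.mem_span_singleton, ← Ideal.span_singleton_pow,
    ← comap_map_pow_adicCompletion (Ideal.span {π}) k, Ideal.mem_comap,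
    Ideal.span_singleton_pow, Ideal.map_span, Set.image_singleton, Ideal.mem_span_singleton]
  exact h

end Completion

theorem map_eq_zpow_mul_iff {G H : Type*} [Monoid G] [Monoid H] (φ : G →* H) (u : Gˣ) (n : ℤ)
    (x : G) (y : H) :
    φ x = ↑(Units.map φ u ^ n) * y ↔ φ (↑(u ^ (-n)) * x) = y := by
  rw [← Units.inv_mul_eq_iff_eq_mul, ← zpow_neg, ← map_zpow, Units.coe_map, ← map_mul]

section Localization

variable {A B : Type*} [CommRing A] [CommRing B] (f : A →+* B)
  (S T : Type*) [CommRing S] [Algebra A S] [CommRing T] [Algebra B T]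

theorem comap_localizationMap_range_algebraMap {M : Submonoid A} {N : Submonoid B}
    (hMN : M.map f = N) [IsLocalization M S] [IsLocalization N T]
    (hf : ∀ s ∈ M, ∀ a, f s ∣ f a → s ∣ a) :
    (algebraMap B T).range.comap (IsLocalization.map T f (Submonoid.map_le_iff_le_comap.1 hMN.le) :
      S →+* T) = (algebraMap A S).range := by
  ext x
  constructor
  · rintro ⟨b, hb⟩
    obtain ⟨a, s, rfl⟩ := IsLocalization.exists_mk'_eq M x
    rw [IsLocalization.map_mk', IsLocalization.eq_mk'_iff_mul_eq, ← map_mul] at hb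
    obtain ⟨⟨c, hc⟩, hcb⟩ := IsLocalization.exists_of_eq (M := N) hb
    obtain ⟨t, ht, rfl⟩ : c ∈ M.map f := hMN ▸ hc
    have map_dvd : f (t * s) ∣ f (t * a) :=
      ⟨b, by rw [map_mul, map_mul, mul_assoc, mul_comm (f s), ← hcb]⟩
    obtain ⟨r, hr⟩ := hf _ (M.mul_mem ht s.2) _ map_dvd
    refine ⟨r, IsLocalization.eq_mk'_iff_mul_eq.2 ?_⟩
    rw [← map_mul, IsLocalization.eq_iff_exists M]
    exact ⟨⟨t, ht⟩, by rw [hr, mul_comm r, mul_assoc]⟩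
  · rintro ⟨a, rfl⟩
    exact ⟨f a, (IsLocalization.map_eq _ a).symm⟩

theorem exists_awayMap_eq_zpow_mul_iff (π : A) [IsLocalization.Away π S]
    [IsLocalization.Away (f π) T] (hf : ∀ k a, f (π ^ k) ∣ f a → π ^ k ∣ a) (n : ℤ) (x : S) :
    (∃ b, IsLocalization.Away.map S T f π x =
      ↑((IsLocalization.Away.algebraMap_isUnit (S := T) (f π)).unit ^ n) * algebraMap B T b) ↔
    ∃ a, x = ↑((IsLocalization.Away.algebraMap_isUnit (S := S) π).unit ^ n) * algebraMap A S a := by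
  set φ := IsLocalization.Away.map S T f π
  set u := (IsLocalization.Away.algebraMap_isUnit (S := S) π).unit
  have map_unit : (IsLocalization.Away.algebraMap_isUnit (S := T) (f π)).unit =
      Units.map (φ : S →* T) u :=
    Units.ext <| by simp [φ, u, IsLocalization.Away.map]
  have preimage_range : (algebraMap B T).range.comap φ = (algebraMap A S).range :=
    comap_localizationMap_range_algebraMap f S T (Submonoid.map_powers f π) (by
      rintro _ ⟨k, rfl⟩
      exact hf k)
  calc
    _ ↔ ∃ b, φ (↑(u ^ (-n)) * x) = algebraMap B T b := by
      rw [map_unit]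
      exact exists_congr fun b ↦ map_eq_zpow_mul_iff (φ : S →* T) u n x (algebraMap B T b)
    _ ↔ ↑(u ^ (-n)) * x ∈ (algebraMap B T).range.comap φ :=
      exists_congr fun _ ↦ eq_comm
    _ ↔ ↑(u ^ (-n)) * x ∈ (algebraMap A S).range := by rw [preimage_range]
    _ ↔ ∃ a, x = ↑(u ^ n) * algebraMap A S a :=
      exists_congr fun a ↦ eq_comm.trans <| by rw [zpow_neg, Units.inv_mul_eq_iff_eq_mul]

end Localization

theorem preimage_pow_smul_adicCompletion_general {R : Type*} [CommRing R] (π : R)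
    (S T : Type*) [CommRing S] [Algebra R S] [IsLocalization.Away π S]
    [CommRing T] [Algebra (AdicCompletion (Ideal.span {π}) R) T]
    [IsLocalization.Away (algebraMap R (AdicCompletion (Ideal.span {π}) R) π) T]
    (n : ℤ) (x : S) :
    (∃ y : AdicCompletion (Ideal.span {π}) R,
      IsLocalization.Away.map S T (algebraMap R (AdicCompletion (Ideal.span {π}) R)) π x =
        ↑((IsLocalization.Away.algebraMap_isUnit (S := T)
          (algebraMap R (AdicCompletion (Ideal.span {π}) R) π)).unit ^ n) * algebraMap _ T y) ↔
    ∃ r : R,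
      x = ↑((IsLocalization.Away.algebraMap_isUnit (S := S) π).unit ^ n) * algebraMap R S r :=
  exists_awayMap_eq_zpow_mul_iff _ S T π
    (fun _ _ ↦ pow_dvd_of_algebraMap_adicCompletion_dvd) n x

theorem preimage_pow_smul_adicCompletion (R : Type u) [CommRing R]
    (π : R) (hπ : π ∈ nonZeroDivisors R) (n : ℤ) (x : Localization.Away π) :
    (∃ y : AdicCompletion (Ideal.span {π}) R,
        Localization.awayMap (algebraMap R (AdicCompletion (Ideal.span {π}) R)) π x
          = ((IsLocalization.map_units
                (M := Submonoid.powers (algebraMap R (AdicCompletion (Ideal.span {π}) R) π))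
                (Localization.Away (algebraMap R (AdicCompletion (Ideal.span {π}) R) π))
                ⟨algebraMap R (AdicCompletion (Ideal.span {π}) R) π,
                  Submonoid.mem_powers _⟩).unit ^ n :
              (Localization.Away (algebraMap R (AdicCompletion (Ideal.span {π}) R) π))ˣ)
            * algebraMap (AdicCompletion (Ideal.span {π}) R)
                (Localization.Away (algebraMap R (AdicCompletion (Ideal.span {π}) R) π)) y) ↔
    (∃ r : R,
        x = ((IsLocalization.map_units (M := Submonoid.powers π) (Localization.Away π)
                ⟨π, Submonoid.mem_powers _⟩).unit ^ n : (Localization.Away π)ˣ)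
          * algebraMap R (Localization.Away π) r) :=
  preimage_pow_smul_adicCompletion_general π _ _ n x
end

section
/- Let p be a prime number and R a commutative ring. Then there exists an R-algebra R_∞ satisfying: (i) R_∞[1/p] is a filtered colimit of finite étale, faithfully flat R[1/p]-algebras; (ii) R_∞ is the integral closure of R in R_∞[1/p]; (iii) every unit t of R_∞ admits a p-th root t^{1/p} in R_∞. Moreover, if p lies in the Jacobson radical of R and there exist p_2 ∈ R and a unit u ∈ R^× with p = u·p_2^{p²}, then, setting p_1 = p_2^p, one can choose R_∞ so that in addition (iv) the ring homomorphism R_∞/p_1R_∞ → R_∞/pR_∞ induced by x ↦ x^p is an isomorphism. -/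
/-!
STATEMENT 17: For a prime `p` and a commutative ring `R`, there exists an `R`-algebra `R_∞`
such that (i) `R_∞[1/p]` is a filtered (directed) colimit of finite étale faithfully flat
`R[1/p]`-algebras, (ii) `R_∞` is the integral closure of `R` in `R_∞[1/p]`, and (iii) every
unit of `R_∞` admits a `p`-th root.  Moreover, if `p` lies in the Jacobson radical of `R`
and `p = u·p₂^{p²}` for a unit `u`, then one may also require (iv) that the map
`R_∞/p₁R_∞ → R_∞/pR_∞`, `x ↦ x^p`, with `p₁ = p₂^p`, is bijective.
-/

universe u

set_option maxHeartbeats 1000000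
set_option synthInstance.maxHeartbeats 400000

/-- A bundled commutative algebra over `R`. -/
structure AlgPack (R : Type u) [CommRing R] : Type (u + 1) where
  X : Type u
  [commRing : CommRing X]
  [algebra : Algebra R X]

attribute [instance] AlgPack.commRing AlgPack.algebra

section

variable {R : Type u} [CommRing R] (p : ℕ)

/-- Conditions (i)-(iii) on the `R`-algebra `R_∞`. -/
def GoodTower (P : AlgPack R) : Prop :=
  -- (i) `R_∞[1/p]` is a directed union of finite étale faithfully flat `R[1/p]`-subalgebras
  (letI : Algebra (Localization.Away ((p : R)))
      (Localization.Away (algebraMap R P.X (p : R))) :=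
    (Localization.awayMap (algebraMap R P.X) ((p : R))).toAlgebra
   ∃ 𝒮 : Set (Subalgebra (Localization.Away ((p : R)))
      (Localization.Away (algebraMap R P.X (p : R)))),
    (∀ T ∈ 𝒮, Algebra.Etale (Localization.Away ((p : R))) ↥T ∧
      Module.Finite (Localization.Away ((p : R))) ↥T ∧
      Module.FaithfullyFlat (Localization.Away ((p : R))) ↥T) ∧
    (∀ T ∈ 𝒮, ∀ T' ∈ 𝒮, ∃ T'' ∈ 𝒮, T ≤ T'' ∧ T' ≤ T'') ∧
    (∀ x : Localization.Away (algebraMap R P.X (p : R)), ∃ T ∈ 𝒮, x ∈ T)) ∧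
  -- (ii) `R_∞` is the integral closure of `R` in `R_∞[1/p]`
  (Function.Injective (algebraMap P.X (Localization.Away (algebraMap R P.X (p : R)))) ∧
   (letI : Algebra R (Localization.Away (algebraMap R P.X (p : R))) :=
      ((algebraMap P.X (Localization.Away (algebraMap R P.X (p : R)))).comp
        (algebraMap R P.X)).toAlgebra
    ∀ x : Localization.Away (algebraMap R P.X (p : R)),
      IsIntegral R x ↔
        ∃ r : P.X, algebraMap P.X (Localization.Away (algebraMap R P.X (p : R))) r = x)) ∧
  -- (iii) every unit of `R_∞` has a `p`-th root
  (∀ t : (P.X)ˣ, ∃ s : P.X, s ^ p = (t : P.X))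

end

/-!
Over `A = R[1/p]` the integer `p` is invertible, so `X ^ p - t` is monic and separable for every
unit `t` and `A[X] / (X ^ p - t)` is a finite étale cover of `A`. Adjoining `p`-th roots of all
units, and repeating this countably often, gives a filtered union `B` of such covers in which every
unit is a `p`-th power. Take for `R_∞` the integral closure of `R` in `B`: it inherits the roots of
its units, and `B = R_∞[1/p]` since every element of `B` is integral over `A`.

The Frobenius `x ↦ x ^ p` from `R_∞ / p₁` to `R_∞ / p` is injective because `R_∞` is integrally
closed in `B`: if `p₁ ^ p ∣ x ^ p`, then `x / p₁ ∈ B` is integral. For surjectivity, write `c = p₂`.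
As `c` lies in the Jacobson radical, `1 + c ^ p * x` is a unit, hence a `p`-th power `s ^ p`. Now
`c ^ p ∣ s ^ p - 1` gives `c ^ p ∣ (s - 1) ^ p`, so `s - 1 = c * y` with `y ∈ R_∞`, and
`x ≡ y ^ p` modulo `c ^ p`. Applying the same to the quotient `(x - y ^ p) / c ^ p`, `p` times over,
and using the additivity of Frobenius modulo `p` improves the modulus to `c ^ (p ^ 2)`, an associate
of `p`.
-/

section FiniteEtale

open Polynomial

variable (A B : Type*) {E : Type*} [CommRing A] [CommRing B] [CommRing E] [Algebra A B]
  [Algebra A E]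

/-- A finite étale faithfully flat algebra `B` over `A`, geometrically a finite étale covering
`Spec B → Spec A`. -/
structure IsFiniteEtaleCover : Prop where
  etale : Algebra.Etale A B
  finite : Module.Finite A B
  faithfullyFlat : Module.FaithfullyFlat A B

/-- `B` is a directed union of finite étale covers of `A`. Directedness is encoded by letting every
finite subset of `B` lie in a single subalgebra that is a cover. -/
def IsIndFiniteEtaleCover : Prop :=
  ∀ s : Finset B, ∃ T : Subalgebra A B, IsFiniteEtaleCover A T ∧ (s : Set B) ⊆ T

variable {A B}

namespace IsFiniteEtaleCover

variable (A) in
lemma refl : IsFiniteEtaleCover A A := ⟨inferInstance, inferInstance, inferInstance⟩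

lemma of_equiv (h : IsFiniteEtaleCover A B) (e : B ≃ₐ[A] E) : IsFiniteEtaleCover A E := by
  obtain ⟨_, _, _⟩ := h
  exact ⟨Algebra.Etale.of_equiv e, Module.Finite.equiv e.toLinearEquiv,
    Module.FaithfullyFlat.of_linearEquiv _ _ e.symm.toLinearEquiv⟩

lemma trans [Algebra B E] [IsScalarTower A B E] (hB : IsFiniteEtaleCover A B)
    (hE : IsFiniteEtaleCover B E) : IsFiniteEtaleCover A E := by
  obtain ⟨_, _, _⟩ := hB
  obtain ⟨_, _, _⟩ := hE
  exact ⟨Algebra.Etale.comp A B E, Module.Finite.trans B E, Module.FaithfullyFlat.trans A B E⟩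

lemma map {T : Subalgebra A B} (hT : IsFiniteEtaleCover A T) (f : B →ₐ[A] E)
    (hf : Function.Injective f) : IsFiniteEtaleCover A (T.map f) :=
  hT.of_equiv (T.equivMapOfInjective f hf)

lemma exists_finset_subset_imp_le {T : Subalgebra A B} (hT : IsFiniteEtaleCover A T) :
    ∃ s : Finset B, ∀ T' : Subalgebra A B, (s : Set B) ⊆ T' → T ≤ T' := by
  obtain ⟨s, hs⟩ := (Module.Finite.iff_fg (N := Subalgebra.toSubmodule T)).1 hT.finite
  exact ⟨s, fun T' hsT' => hs.ge.trans (Submodule.span_le (p := Subalgebra.toSubmodule T').2 hsT')⟩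

end IsFiniteEtaleCover

namespace IsIndFiniteEtaleCover

variable (A) in
lemma refl : IsIndFiniteEtaleCover A A := fun _ =>
  ⟨⊤, (IsFiniteEtaleCover.refl A).of_equiv Subalgebra.topEquiv.symm, Set.subset_univ _⟩

lemma of_equiv (h : IsIndFiniteEtaleCover A B) (e : B ≃ₐ[A] E) : IsIndFiniteEtaleCover A E := by
  classical
  intro s
  obtain ⟨T, hT, hsT⟩ := h (s.image e.symm)
  exact ⟨T.map (e : B →ₐ[A] E), hT.map _ e.injective, fun x hx =>
    ⟨e.symm x, hsT (Finset.mem_coe.2 (Finset.mem_image_of_mem _ hx)), e.apply_symm_apply x⟩⟩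

lemma isIntegral (h : IsIndFiniteEtaleCover A B) : Algebra.IsIntegral A B := by
  refine ⟨fun b => ?_⟩
  obtain ⟨T, hT, hbT⟩ := h {b}
  have := hT.finite
  exact (Algebra.IsIntegral.isIntegral (R := A) (⟨b, hbT (by simp)⟩ : T)).map T.val

lemma exists_ge_ge (h : IsIndFiniteEtaleCover A B) {T T' : Subalgebra A B}
    (hT : IsFiniteEtaleCover A T) (hT' : IsFiniteEtaleCover A T') :
    ∃ T'' : Subalgebra A B, IsFiniteEtaleCover A T'' ∧ T ≤ T'' ∧ T' ≤ T'' := by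
  classical
  obtain ⟨s, hs⟩ := hT.exists_finset_subset_imp_le
  obtain ⟨s', hs'⟩ := hT'.exists_finset_subset_imp_le
  obtain ⟨T'', hT'', hss'⟩ := h (s ∪ s')
  rw [Finset.coe_union, Set.union_subset_iff] at hss'
  exact ⟨T'', hT'', hs _ hss'.1, hs' _ hss'.2⟩

end IsIndFiniteEtaleCover

lemma etale_adjoinRoot_of_monic_of_separable {f : A[X]} (hf : f.Monic) (hsep : f.Separable) :
    Algebra.Etale A (AdjoinRoot f) := by
  obtain ⟨a, b, hab⟩ := hsep
  let P : StandardEtalePair A :=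
    { f := f
      monic_f := hf
      g := 1
      cond := ⟨b, a, 1, by linear_combination hab⟩ }
  have hg : IsUnit (AdjoinRoot.mk P.f P.g) := by simp [P]
  exact Algebra.Etale.of_equiv <| P.equivAwayAdjoinRoot.trans
    ((IsLocalization.atUnit (AdjoinRoot P.f) (Localization.Away (AdjoinRoot.mk P.f P.g))
      (AdjoinRoot.mk P.f P.g) hg).restrictScalars A).symm

lemma isFiniteEtaleCover_adjoinRoot_X_pow_sub_C {n : ℕ} (hn : n ≠ 0) (hnA : IsUnit (n : A))
    {t : A} (ht : IsUnit t) : IsFiniteEtaleCover A (AdjoinRoot (X ^ n - C t)) := by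
  have hmonic : (X ^ n - C t).Monic := monic_X_pow_sub_C t hn
  refine ⟨etale_adjoinRoot_of_monic_of_separable hmonic (separable_X_pow_sub_C_unit ht.unit hnA),
    hmonic.finite_adjoinRoot, ?_⟩
  have : Module.Free A (AdjoinRoot (X ^ n - C t)) := hmonic.free_adjoinRoot
  rcases subsingleton_or_nontrivial A with _ | _
  · exact ⟨fun m hm => absurd (Subsingleton.elim m ⊤) hm.ne_top⟩
  · have : Nontrivial (AdjoinRoot (X ^ n - C t)) := Ideal.Quotient.nontrivial_iff.2 <| by
      rw [Ne, Ideal.span_singleton_eq_top, hmonic.isUnit_iff]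
      exact ne_of_apply_ne natDegree (by simpa [natDegree_X_pow_sub_C] using hn)
    infer_instance

lemma adjoinRoot_lift_injective {T C D : Type*} [CommRing T] [CommRing C] [CommRing D] {f : T[X]}
    (hf : f.Monic) {i : T →+* C} {x : C} (hx : f.eval₂ i x = 0) {j : T →+* D}
    (hj : Function.Injective j) {g : D[X]} (hg : f.map j = g) (ψ : C →+* AdjoinRoot g)
    (hψx : ψ x = AdjoinRoot.root g) (hψ : ψ.comp i = (AdjoinRoot.of g).comp j) :
    Function.Injective (AdjoinRoot.lift i x hx) := by
  subst hg
  refine (injective_iff_map_eq_zero _).2 fun y hy => ?_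
  obtain ⟨h, rfl⟩ := AdjoinRoot.mk_surjective y
  rw [AdjoinRoot.lift_mk] at hy
  have hmap : AdjoinRoot.mk (f.map j) (h.map j) = 0 := by
    rw [← AdjoinRoot.aeval_eq, aeval_def, AdjoinRoot.algebraMap_eq, eval₂_map, ← hψ, ← hψx,
      ← hom_eval₂, hy, map_zero]
  rwa [AdjoinRoot.mk_eq_zero, map_dvd_map j hj hf, ← AdjoinRoot.mk_eq_zero] at hmap

lemma IsFiniteEtaleCover.sup_adjoin_singleton {n : ℕ} (hn : n ≠ 0) (hnA : IsUnit (n : A))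
    {T : Subalgebra A E} (hT : IsFiniteEtaleCover A T) {t : T} (ht : IsUnit t) {x : E}
    (htx : (t : E) = x ^ n) (ψ : E →+* AdjoinRoot (X ^ n - C (x ^ n)))
    (hψx : ψ x = AdjoinRoot.root _) (hψ : ∀ a ∈ T, ψ a = AdjoinRoot.of _ a) :
    IsFiniteEtaleCover A ↥(T ⊔ Algebra.adjoin A {x}) := by
  have hnT : IsUnit (n : T) := by simpa using hnA.map (algebraMap A T)
  have hxt : (X ^ n - C t).eval₂ (algebraMap T E) x = 0 := by
    simp [htx]
  let φ : AdjoinRoot (X ^ n - C t) →ₐ[T] E := AdjoinRoot.liftAlgHom _ (Algebra.ofId T E) x hxt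
  have hφ : Function.Injective φ :=
    adjoinRoot_lift_injective (monic_X_pow_sub_C t hn) hxt (j := algebraMap T E)
      Subtype.val_injective (by simp [htx]) ψ hψx (RingHom.ext fun a => hψ a a.2)
  have hφx : φ (AdjoinRoot.root _) = x := AdjoinRoot.lift_root hxt
  have hrange : (φ.restrictScalars A).range = T ⊔ Algebra.adjoin A {x} := calc
    (φ.restrictScalars A).range = φ.range.restrictScalars A := rfl
    _ = (Algebra.adjoin T {x}).restrictScalars A := by
      rw [← Algebra.map_top, ← AdjoinRoot.adjoinRoot_eq_top, AlgHom.map_adjoin_singleton, hφx]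
    _ = T ⊔ Algebra.adjoin A {x} := by
      rw [Algebra.restrictScalars_adjoin, Algebra.adjoin_union, Algebra.adjoin_eq]
  rw [← hrange]
  exact (hT.trans (isFiniteEtaleCover_adjoinRoot_X_pow_sub_C hn hnT ht)).of_equiv
    (AlgEquiv.ofInjective (φ.restrictScalars A) hφ)

end FiniteEtale

section AdjoinRoots

variable {σ A B : Type*} [CommRing A] [CommRing B] [Algebra A B] (n : ℕ) (b : σ → B)

open MvPolynomial in
/-- The universal `B`-algebra with an `n`-th root of each member of the family `b`. -/
abbrev AdjoinRoots : Type _ :=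
  MvPolynomial σ B ⧸ Ideal.span (Set.range fun i => (X i ^ n - C (b i) : MvPolynomial σ B))

namespace AdjoinRoots

open MvPolynomial

/-- The class of a polynomial in `AdjoinRoots n b`. -/
noncomputable def mk : MvPolynomial σ B →ₐ[B] AdjoinRoots n b := Ideal.Quotient.mkₐ B _

/-- The adjoined `n`-th root of `b i`. -/
noncomputable def root (i : σ) : AdjoinRoots n b := mk n b (X i)

lemma root_pow (i : σ) : root n b i ^ n = algebraMap B (AdjoinRoots n b) (b i) :=
  (map_pow _ _ _).symm.trans <| Ideal.Quotient.eq.2 (Ideal.subset_span ⟨i, rfl⟩)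

variable {b} in
/-- The universal property of `AdjoinRoots n b`. -/
noncomputable def lift {D : Type*} [CommRing D] [Algebra B D] (r : σ → D)
    (hr : ∀ i, r i ^ n = algebraMap B D (b i)) : AdjoinRoots n b →ₐ[B] D :=
  Ideal.Quotient.liftₐ _ (aeval r) fun _ ha =>
    (Ideal.span_le (I := RingHom.ker (aeval r))).2
      (by rintro _ ⟨i, rfl⟩; simp [RingHom.mem_ker, hr]) ha

variable {b} in
lemma lift_root {D : Type*} [CommRing D] [Algebra B D] (r : σ → D)
    (hr : ∀ i, r i ^ n = algebraMap B D (b i)) (i : σ) : lift n r hr (root n b i) = r i :=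
  aeval_X r i

/-- The `B`-linear retraction of `B → AdjoinRoots n b`, on representing polynomials: it maps the
monomial `(X ^ k) ^ n` to `b ^ k` and kills the monomials that are not `n`-th powers. -/
noncomputable def retract : MvPolynomial σ B →ₗ[B] B :=
  (basisMonomials σ B).constr B (Function.extend (n • ·) (fun k => eval b (monomial k 1)) 0)

lemma retract_monomial (m : σ →₀ ℕ) : retract n b (monomial m 1) =
    Function.extend (n • ·) (fun k => eval b (monomial k 1)) 0 m := by
  simpa only [retract, coe_basisMonomials] using (basisMonomials σ B).constr_basis B _ m

variable {n}

lemma retract_monomial_nsmul (hn : n ≠ 0) (k : σ →₀ ℕ) :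
    retract n b (monomial (n • k) 1) = eval b (monomial k 1) := by
  rw [retract_monomial, (nsmul_right_injective hn).extend_apply]

lemma retract_mul_X_pow (hn : n ≠ 0) (f : MvPolynomial σ B) (i : σ) :
    retract n b (f * X i ^ n) = b i * retract n b f := by
  suffices retract n b ∘ₗ LinearMap.mulRight B (X i ^ n) = b i • retract n b from
    LinearMap.congr_fun this f
  refine (basisMonomials σ B).ext fun m => ?_
  have hX : X i ^ n = monomial (n • Finsupp.single i 1) (1 : B) := by
    rw [X, monomial_pow, one_pow]
  rw [LinearMap.comp_apply, LinearMap.mulRight_apply, LinearMap.smul_apply, coe_basisMonomials,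
    smul_eq_mul, hX, monomial_mul, mul_one]
  by_cases hm : ∃ k, n • k = m
  · obtain ⟨k, rfl⟩ := hm
    rw [← nsmul_add, retract_monomial_nsmul b hn, retract_monomial_nsmul b hn,
      monomial_add_single, pow_one, map_mul, eval_X, mul_comm]
  · have hm' : ¬∃ k, n • k = m + n • Finsupp.single i 1 := fun ⟨k, hk⟩ =>
      hm ⟨k - Finsupp.single i 1, by
        ext j
        have hkj : n * k j = m j + n * Finsupp.single i 1 j := DFunLike.congr_fun hk j
        rw [Finsupp.smul_apply, Finsupp.tsub_apply, smul_eq_mul, Nat.mul_sub, hkj,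
          Nat.add_sub_cancel]⟩
    rw [retract_monomial, retract_monomial, Function.extend_apply' _ _ _ hm,
      Function.extend_apply' _ _ _ hm', Pi.zero_apply, Pi.zero_apply, mul_zero]

lemma algebraMap_injective (hn : n ≠ 0) : Function.Injective (algebraMap B (AdjoinRoots n b)) := by
  have hker {f : MvPolynomial σ B} (hf : f ∈ Ideal.span (Set.range fun i => X i ^ n - C (b i))) :
      ∀ g, retract n b (g * f) = 0 := by
    induction hf using Submodule.span_induction with
    | mem f hf =>
      obtain ⟨i, rfl⟩ := hf
      intro g
      rw [mul_sub, map_sub, retract_mul_X_pow b hn, mul_comm g, C_mul', map_smul,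
        smul_eq_mul, sub_self]
    | zero => simp
    | add f f' _ _ hf hf' => intro g; rw [mul_add, map_add, hf, hf', add_zero]
    | smul a f _ hf => intro g; rw [smul_eq_mul, ← mul_assoc, hf]
  have hone : retract n b 1 = 1 := by
    simpa using retract_monomial_nsmul b hn 0
  refine (injective_iff_map_eq_zero _).2 fun c hc => ?_
  have h : retract n b (1 * C c) = 0 := hker (Ideal.Quotient.eq_zero_iff_mem.1 hc) 1
  rwa [mul_comm, C_mul', map_smul, hone, smul_eq_mul, mul_one] at h

/-- The `B`-algebra map replacing the `n`-th root of `b i` by a new one, adjoined to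
`AdjoinRoots n b`, and fixing the roots of the other `b j`. It shows that `root n b i` satisfies
no relation over the other roots except `X ^ n = b i`. -/
noncomputable def splitOff (i : σ) : AdjoinRoots n b →ₐ[B]
    AdjoinRoot (Polynomial.X ^ n - Polynomial.C (root n b i ^ n)) := by
  classical
  exact lift n (fun j => if j = i then AdjoinRoot.root _ else AdjoinRoot.of _ (root n b j))
    fun j => by
      split_ifs with h
      · subst h
        have := AdjoinRoot.eval₂_root (Polynomial.X ^ n - Polynomial.C (root n b j ^ n))
        rw [Polynomial.eval₂_sub, Polynomial.eval₂_pow, Polynomial.eval₂_X, Polynomial.eval₂_C,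
          sub_eq_zero] at this
        rw [this, root_pow, AdjoinRoot.algebraMap_eq']
        rfl
      · rw [← map_pow, root_pow n b j, AdjoinRoot.algebraMap_eq']
        rfl

lemma splitOff_root_self (i : σ) : splitOff b i (root n b i) = AdjoinRoot.root _ := by
  rw [splitOff, lift_root, if_pos rfl]

lemma splitOff_root_of_ne {i j : σ} (h : j ≠ i) :
    splitOff b i (root n b j) = AdjoinRoot.of _ (root n b j) := by
  rw [splitOff, lift_root, if_neg h]

lemma splitOff_apply_of_mem (T : Subalgebra A B) {s : Set σ} {i : σ} (hi : i ∉ s)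
    {a : AdjoinRoots n b} (ha : a ∈ T.map (IsScalarTower.toAlgHom A B (AdjoinRoots n b)) ⊔
      Algebra.adjoin A (root n b '' s)) :
    splitOff b i a = AdjoinRoot.of _ a := by
  let fixed : Subalgebra B (AdjoinRoots n b) :=
    AlgHom.equalizer (splitOff b i) (IsScalarTower.toAlgHom B _ _)
  refine (sup_le ?_ (Algebra.adjoin_le ?_) : _ ≤ fixed.restrictScalars A) ha
  · rintro _ ⟨c, -, rfl⟩
    exact fixed.algebraMap_mem c
  · rintro _ ⟨j, hj, rfl⟩
    exact splitOff_root_of_ne b (ne_of_mem_of_not_mem hj hi)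

variable {b}

lemma isFiniteEtaleCover_map_sup_adjoin (hn : n ≠ 0) (hnA : IsUnit (n : A)) {T : Subalgebra A B}
    (hT : IsFiniteEtaleCover A T) (s : Finset σ) (hs : ∀ i ∈ s, ∃ u : T, IsUnit u ∧ u = b i) :
    IsFiniteEtaleCover A ↥(T.map (IsScalarTower.toAlgHom A B (AdjoinRoots n b)) ⊔
      Algebra.adjoin A (root n b '' s)) := by
  classical
  induction s using Finset.induction_on with
  | empty =>
    rw [Finset.coe_empty, Set.image_empty, Algebra.adjoin_empty, sup_bot_eq]
    exact hT.map _ (algebraMap_injective b hn)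
  | insert i s hi ih =>
    set T' := T.map (IsScalarTower.toAlgHom A B (AdjoinRoots n b)) ⊔
      Algebra.adjoin A (root n b '' s)
    have hT' : IsFiniteEtaleCover A T' := ih fun j hj => hs j (Finset.mem_insert_of_mem hj)
    obtain ⟨u, hu, hui⟩ := hs i (Finset.mem_insert_self i s)
    let ι : T →ₐ[A] T' := ((IsScalarTower.toAlgHom A B (AdjoinRoots n b)).comp T.val).codRestrict T'
      fun a => Algebra.mem_sup_left ⟨a, a.2, rfl⟩
    have hιu : (ι u : AdjoinRoots n b) = root n b i ^ n := by
      rw [root_pow, ← hui]; rfl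
    have h := hT'.sup_adjoin_singleton hn hnA (hu.map ι) hιu (splitOff b i).toRingHom
      (splitOff_root_self b i) fun a ha => splitOff_apply_of_mem b T hi ha
    rwa [sup_assoc, ← Algebra.adjoin_union, Set.union_singleton, ← Set.image_insert_eq,
      ← Finset.coe_insert] at h

lemma mk_mem_map_sup_adjoin {T : Subalgebra A B} {s : Finset σ} {f : MvPolynomial σ B}
    (hcoeff : ∀ m ∈ f.support, f.coeff m ∈ T) (hvars : f.vars ⊆ s) :
    mk n b f ∈ T.map (IsScalarTower.toAlgHom A B (AdjoinRoots n b)) ⊔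
      Algebra.adjoin A (root n b '' s) := by
  rw [f.as_sum, map_sum]
  refine sum_mem fun m hm => ?_
  rw [monomial_eq, map_mul, Finsupp.prod, map_prod]
  have hmT : mk n b (C (f.coeff m)) ∈ T.map (IsScalarTower.toAlgHom A B (AdjoinRoots n b)) :=
    ⟨_, hcoeff m hm, rfl⟩
  refine mul_mem (Algebra.mem_sup_left hmT) (prod_mem fun i hi => ?_)
  rw [map_pow]
  have his : i ∈ s := hvars ((mem_vars_iff_mem_support i).2 ⟨m, hm, hi⟩)
  exact pow_mem (Algebra.mem_sup_right (Algebra.subset_adjoin (Set.mem_image_of_mem _ his))) _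

lemma isIndFiniteEtaleCover (hn : n ≠ 0) (hnA : IsUnit (n : A)) (hB : IsIndFiniteEtaleCover A B)
    (hb : ∀ i, IsUnit (b i)) : IsIndFiniteEtaleCover A (AdjoinRoots n b) := by
  classical
  intro t
  choose rep hrep using Ideal.Quotient.mk_surjective
    (I := Ideal.span (Set.range fun i => (X i ^ n - C (b i) : MvPolynomial σ B)))
  let s : Finset σ := t.biUnion fun a => (rep a).vars
  obtain ⟨T, hT, hsT⟩ := hB ((t.biUnion fun a => (rep a).coeffs) ∪
    (s.image b ∪ s.image fun i => ↑(hb i).unit⁻¹))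
  simp only [Finset.coe_union, Set.union_subset_iff, Finset.coe_biUnion, Set.iUnion_subset_iff,
    Finset.coe_image, Set.image_subset_iff] at hsT
  obtain ⟨hcoeff, hbT, hinvT⟩ := hsT
  refine ⟨_, isFiniteEtaleCover_map_sup_adjoin hn hnA hT s fun i hi => ?_, fun a ha => ?_⟩
  · exact ⟨⟨b i, hbT hi⟩, .of_mul_eq_one ⟨_, hinvT hi⟩ (Subtype.ext (hb i).mul_val_inv), rfl⟩
  · rw [← hrep a]
    exact mk_mem_map_sup_adjoin
      (fun m hm => hcoeff a ha (coeff_mem_coeffs m (mem_support_iff.1 hm)))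
      (Finset.subset_biUnion_of_mem (fun a => (rep a).vars) ha)

end AdjoinRoots

end AdjoinRoots

section DirectLimit

variable {A ι : Type*} [CommRing A] [Preorder ι] [IsDirectedOrder ι] [Nonempty ι]
  {G : ι → Type*} [∀ i, CommRing (G i)] [∀ i, Algebra A (G i)] {f : ∀ i j, i ≤ j → G i →ₐ[A] G j}
  [DirectedSystem G (f · · ·)]

lemma exists_subset_range_directLimit_of (s : Finset (DirectLimit G f)) :
    ∃ i, (s : Set (DirectLimit G f)) ⊆ Set.range (DirectLimit.Algebra.of (R := A) G f i) := by
  classical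
  choose idx rep hrep using DirectLimit.exists_eq_mk f
  obtain ⟨i, hi⟩ := (s.image idx).exists_le
  refine ⟨i, fun x hx => ⟨f _ i (hi _ (Finset.mem_image_of_mem idx hx)) (rep x), ?_⟩⟩
  conv_rhs => rw [hrep x]
  exact DirectLimit.mk_apply (f := f) _ _ _ _

lemma IsIndFiniteEtaleCover.directLimit (hG : ∀ i, IsIndFiniteEtaleCover A (G i))
    (hf : ∀ i j hij, Function.Injective (f i j hij)) :
    IsIndFiniteEtaleCover A (DirectLimit G f) := by
  classical
  intro s
  obtain ⟨i, hi⟩ := exists_subset_range_directLimit_of s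
  obtain ⟨s', -, rfl⟩ := Finset.subset_set_image_iff.1 (Set.image_univ ▸ hi)
  obtain ⟨T, hT, hsT⟩ := hG i s'
  refine ⟨T.map (DirectLimit.Algebra.of G f i), hT.map _ (DirectLimit.mk_injective f hf i), ?_⟩
  rw [Finset.coe_image]
  exact Set.image_mono hsT

lemma exists_units_map_directLimit_of_eq (t : (DirectLimit G f)ˣ) :
    ∃ i, ∃ u : (G i)ˣ, Units.map (DirectLimit.Algebra.of (R := A) G f i) u = t := by
  obtain ⟨i, a, b, ha, hb⟩ := DirectLimit.exists_eq_mk₂ f (t : DirectLimit G f) ↑t⁻¹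
  let of := DirectLimit.Algebra.of (R := A) G f
  have hab : of i (a * b) = of i 1 := by
    rw [map_mul, map_one, ← t.mul_inv, ha, hb]
    rfl
  obtain ⟨j, hij, _, hj⟩ := Quotient.exact hab
  have hj' : f i j hij a * f i j hij b = 1 := by rwa [map_mul, map_one] at hj
  exact ⟨j, .mkOfMulEqOne _ _ hj', Units.ext ((DirectLimit.Algebra.of_f hij a).trans ha.symm)⟩

lemma directLimit_exists_pow_eq {n : ℕ}
    (hroot : ∀ i (u : (G i)ˣ), ∃ j, ∃ hij : i ≤ j, ∃ s : G j, s ^ n = f i j hij u)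
    (t : (DirectLimit G f)ˣ) : ∃ s : DirectLimit G f, s ^ n = t := by
  obtain ⟨i, u, rfl⟩ := exists_units_map_directLimit_of_eq t
  obtain ⟨j, hij, s, hs⟩ := hroot i u
  exact ⟨DirectLimit.Algebra.of (R := A) G f j s, by
    rw [← map_pow, hs, DirectLimit.Algebra.of_f]; rfl⟩

end DirectLimit

section RootClosure

open CategoryTheory

/-- The universal `B`-algebra with an `n`-th root of each unit of `B`. -/
abbrev AdjoinUnitRoots (n : ℕ) (B : Type*) [CommRing B] : Type _ :=
  AdjoinRoots n (Units.val : Bˣ → B)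

variable (n : ℕ) (A : Type u) [CommRing A]

/-- The tower `A → B₁ → B₂ → ⋯` in which each step adjoins an `n`-th root of every unit. -/
noncomputable def rootTower : ℕ → CommAlgCat.{u} A
  | 0 => .of A A
  | k + 1 => .of A (AdjoinUnitRoots n (rootTower k))

/-- The inclusion of a step of `rootTower n A` into the next one. -/
noncomputable def rootTowerStep (k : ℕ) : rootTower n A k →ₐ[A] rootTower n A (k + 1) :=
  IsScalarTower.toAlgHom A (rootTower n A k) (AdjoinUnitRoots n (rootTower n A k))

/-- The tower `rootTower n A` as a functor. -/
noncomputable def rootTowerFunctor : ℕ ⥤ CommAlgCat.{u} A :=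
  Functor.ofSequence fun k => CommAlgCat.ofHom (rootTowerStep n A k)

/-- The transition maps of `rootTower n A`. -/
noncomputable def rootTowerMap (i j : ℕ) (hij : i ≤ j) : rootTower n A i →ₐ[A] rootTower n A j :=
  ((rootTowerFunctor n A).map (homOfLE hij)).hom

instance : DirectedSystem (fun k => rootTower n A k) (rootTowerMap n A · · ·) where
  map_self i := DFunLike.congr_fun
    (congrArg CommAlgCat.Hom.hom ((rootTowerFunctor n A).map_id i))
  map_map _ _ _ hij hjk x := (DFunLike.congr_fun (congrArg CommAlgCat.Hom.hom
    ((rootTowerFunctor n A).map_comp (homOfLE hij) (homOfLE hjk))) x).symm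

variable {n A}

lemma rootTowerMap_succ (k : ℕ) : rootTowerMap n A k (k + 1) k.le_succ = rootTowerStep n A k :=
  congrArg CommAlgCat.Hom.hom
    (Functor.ofSequence_map_homOfLE_succ (fun k => CommAlgCat.ofHom (rootTowerStep n A k)) k)

lemma rootTowerMap_injective (hn : n ≠ 0) (i j : ℕ) (hij : i ≤ j) :
    Function.Injective (rootTowerMap n A i j hij) := by
  induction j, hij using Nat.le_induction with
  | base =>
    intro x y hxy
    rwa [DirectedSystem.map_self' (rootTowerMap n A),
      DirectedSystem.map_self' (rootTowerMap n A)] at hxy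
  | succ j hij ih =>
    intro x y hxy
    rw [← DirectedSystem.map_map' (rootTowerMap n A) hij j.le_succ,
      ← DirectedSystem.map_map' (rootTowerMap n A) hij j.le_succ,
      rootTowerMap_succ] at hxy
    exact ih (AdjoinRoots.algebraMap_injective _ hn hxy)

lemma isIndFiniteEtaleCover_rootTower (hn : n ≠ 0) (hnA : IsUnit (n : A)) (k : ℕ) :
    IsIndFiniteEtaleCover A (rootTower n A k) := by
  induction k with
  | zero => exact .refl A
  | succ k ih => exact AdjoinRoots.isIndFiniteEtaleCover hn hnA ih Units.isUnit

variable (n A)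

/-- The union of the tower `A → B₁ → B₂ → ⋯` in which each step adjoins an `n`-th root of every
unit; in it every unit has an `n`-th root. -/
abbrev RootClosure : Type u := DirectLimit (fun k => rootTower n A k) (rootTowerMap n A)

variable {n A}

lemma isIndFiniteEtaleCover_rootClosure (hn : n ≠ 0) (hnA : IsUnit (n : A)) :
    IsIndFiniteEtaleCover A (RootClosure n A) :=
  .directLimit (isIndFiniteEtaleCover_rootTower hn hnA) (rootTowerMap_injective hn)

lemma rootClosure_exists_pow_eq (t : (RootClosure n A)ˣ) : ∃ s : RootClosure n A, s ^ n = t := by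
  refine directLimit_exists_pow_eq (fun k u => ?_) t
  refine ⟨k + 1, k.le_succ, AdjoinRoots.root n Units.val u, ?_⟩
  rw [rootTowerMap_succ]
  exact AdjoinRoots.root_pow n Units.val u

end RootClosure

section IntegralClosure

variable {R A B : Type*} [CommRing R] [CommRing A] [CommRing B] [Algebra R A] [Algebra A B]
  [Algebra R B] [IsScalarTower R A B]

lemma isLocalization_integralClosure_of_isIntegral (M : Submonoid R) [IsLocalization M A]
    [Algebra.IsIntegral A B] :
    IsLocalization (Algebra.algebraMapSubmonoid (integralClosure R B) M) B := by
  refine ⟨⟨?_, fun b => ?_, fun {x y} hxy => ⟨1, by rw [Subtype.ext hxy]⟩⟩⟩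
  · rintro ⟨_, m, hm, rfl⟩
    rw [← IsScalarTower.algebraMap_apply, IsScalarTower.algebraMap_apply R A B]
    exact (IsLocalization.map_units A ⟨m, hm⟩).map _
  · obtain ⟨m, hm⟩ := IsIntegral.exists_multiple_integral_of_isLocalization M b
      (Algebra.IsIntegral.isIntegral (R := A) b)
    refine ⟨⟨⟨m • b, hm⟩, _, m, m.2, rfl⟩, ?_⟩
    rw [← IsScalarTower.algebraMap_apply, mul_comm, ← Algebra.smul_def]
    rfl

lemma isLocalization_away_integralClosure_of_isIntegral (r : R) [IsLocalization.Away r A]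
    [Algebra.IsIntegral A B] :
    IsLocalization.Away (algebraMap R (integralClosure R B) r) B := by
  simpa only [Algebra.algebraMapSubmonoid_powers] using
    isLocalization_integralClosure_of_isIntegral (A := A) (B := B) (.powers r)

lemma exists_pow_eq_of_isIntegrallyClosedIn {X : Type*} [CommRing X] [Algebra X B]
    [IsIntegrallyClosedIn X B] {n : ℕ} (hn : n ≠ 0) (hroot : ∀ t : Bˣ, ∃ s : B, s ^ n = t)
    (t : Xˣ) : ∃ s : X, s ^ n = t := by
  obtain ⟨s, hs⟩ := hroot (Units.map (algebraMap X B) t)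
  have hs_int : IsIntegral X (s ^ n) := by
    rw [hs]
    exact isIntegral_algebraMap
  obtain ⟨y, rfl⟩ :=
    IsIntegrallyClosedIn.exists_algebraMap_eq_of_isIntegral_pow (Nat.pos_of_ne_zero hn) hs_int
  exact ⟨y, IsIntegralClosure.algebraMap_injective X X B ((map_pow _ _ _).trans hs)⟩

lemma IsIndFiniteEtaleCover.exists_directed_covers (h : IsIndFiniteEtaleCover A B) :
    ∃ 𝒮 : Set (Subalgebra A B),
      (∀ T ∈ 𝒮, Algebra.Etale A T ∧ Module.Finite A T ∧ Module.FaithfullyFlat A T) ∧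
      (∀ T ∈ 𝒮, ∀ T' ∈ 𝒮, ∃ T'' ∈ 𝒮, T ≤ T'' ∧ T' ≤ T'') ∧ ∀ x : B, ∃ T ∈ 𝒮, x ∈ T := by
  refine ⟨{T | IsFiniteEtaleCover A T}, fun T hT => ⟨hT.etale, hT.finite, hT.faithfullyFlat⟩,
    fun T hT T' hT' => h.exists_ge_ge hT hT', fun x => ?_⟩
  obtain ⟨T, hT, hxT⟩ := h {x}
  exact ⟨T, hT, hxT (Finset.mem_coe.2 (Finset.mem_singleton_self x))⟩

lemma isIndFiniteEtaleCover_localizationAway {X : Type*} [CommRing X] [Algebra R X] [Algebra X B]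
    [IsScalarTower R X B] (r : R) [Algebra (Localization.Away r) B]
    [IsScalarTower R (Localization.Away r) B] [IsLocalization.Away (algebraMap R X r) B]
    (hB : IsIndFiniteEtaleCover (Localization.Away r) B) :
    letI := (Localization.awayMap (algebraMap R X) r).toAlgebra
    IsIndFiniteEtaleCover (Localization.Away r) (Localization.Away (algebraMap R X r)) := by
  let := (Localization.awayMap (algebraMap R X) r).toAlgebra
  have : IsScalarTower R (Localization.Away r) (Localization.Away (algebraMap R X r)) :=
    .of_algebraMap_eq' (IsLocalization.lift_comp _).symm
  let e : B ≃ₐ[X] Localization.Away (algebraMap R X r) :=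
    IsLocalization.algEquiv (.powers (algebraMap R X r)) _ _
  exact hB.of_equiv
    ((e.restrictScalars R).extendScalarsOfIsLocalization (Localization.Away r) (.powers r))

end IntegralClosure

section GoodTower

variable {R B : Type u} [CommRing R] [CommRing B] [Algebra R B] {p : ℕ}

lemma goodTower_integralClosure (hp : p ≠ 0) [Algebra (Localization.Away (p : R)) B]
    [IsScalarTower R (Localization.Away (p : R)) B]
    (hB : IsIndFiniteEtaleCover (Localization.Away (p : R)) B)
    (hroot : ∀ t : Bˣ, ∃ s : B, s ^ p = t) : GoodTower p (⟨integralClosure R B⟩ : AlgPack R) := by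
  let := (Localization.awayMap (algebraMap R (integralClosure R B)) (p : R)).toAlgebra
  have := hB.isIntegral
  have := isLocalization_away_integralClosure_of_isIntegral (A := Localization.Away (p : R))
    (B := B) (p : R)
  let e : B ≃ₐ[integralClosure R B] Localization.Away (algebraMap R (integralClosure R B) p) :=
    IsLocalization.algEquiv (.powers (algebraMap R (integralClosure R B) p)) _ _
  have hclosure : IsIntegralClosure (integralClosure R B) R
      (Localization.Away (algebraMap R (integralClosure R B) p)) :=
    IsIntegralClosure.of_algEquiv _ (e.restrictScalars R) fun x => (e.commutes x).symm
  exact ⟨(isIndFiniteEtaleCover_localizationAway _ hB).exists_directed_covers,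
    ⟨hclosure.algebraMap_injective, fun x => hclosure.isIntegral_iff⟩,
    exists_pow_eq_of_isIntegrallyClosedIn hp hroot⟩

end GoodTower

section Frobenius

lemma algebraMap_mem_jacobson_bot {R X : Type*} [CommRing R] [CommRing X] [Algebra R X]
    [Algebra.IsIntegral R X] {x : R} (hx : x ∈ (⊥ : Ideal R).jacobson) :
    algebraMap R X x ∈ (⊥ : Ideal X).jacobson := by
  rw [Ideal.jacobson, Ideal.mem_sInf] at hx ⊢
  rintro M ⟨-, hM⟩
  exact hx ⟨bot_le, Ideal.isMaximal_comap_of_isIntegral_of_isMaximal M⟩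

lemma exists_dvd_sub_pow_add_pow_mul {X : Type*} [CommRing X] {p : ℕ} (hp : p.Prime) {c : X}
    (h : ∀ x : X, ∃ y, c ^ p ∣ x - y ^ p) (k : ℕ) (x : X) :
    ∃ y z, (p : X) ∣ x - (y ^ p + (c ^ k) ^ p * z) := by
  induction k with
  | zero => exact ⟨0, x, by simp [hp.ne_zero]⟩
  | succ k ih =>
    obtain ⟨y, z, a, ha⟩ := ih
    obtain ⟨y', z', hz⟩ := h z
    obtain ⟨r, hr⟩ := exists_add_pow_prime_eq hp y (c ^ k * y')
    refine ⟨y + c ^ k * y', z', a - y * (c ^ k * y') * r, ?_⟩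
    rw [hr]
    linear_combination ha + (c ^ k) ^ p * hz

variable {X B : Type*} [CommRing X] [CommRing B] [Algebra X B] [IsIntegrallyClosedIn X B]
  {p : ℕ} {c : X}

include B in
lemma dvd_of_pow_dvd_pow_of_isIntegrallyClosedIn {n : ℕ} (hn : n ≠ 0)
    (hc : IsUnit (algebraMap X B c)) {x : X} (h : c ^ n ∣ x ^ n) : c ∣ x := by
  obtain ⟨w, hw⟩ := h
  obtain ⟨d, hd⟩ := hc.exists_right_inv
  have hpow : (algebraMap X B x * d) ^ n = algebraMap X B w := by
    rw [mul_pow, ← map_pow, hw, map_mul, map_pow, mul_right_comm, ← mul_pow, hd, one_pow, one_mul]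
  have hint : IsIntegral X ((algebraMap X B x * d) ^ n) := by
    rw [hpow]
    exact isIntegral_algebraMap
  obtain ⟨z, hz⟩ :=
    IsIntegrallyClosedIn.exists_algebraMap_eq_of_isIntegral_pow (Nat.pos_of_ne_zero hn) hint
  refine ⟨z, IsIntegralClosure.algebraMap_injective X X B ?_⟩
  rw [map_mul, hz, mul_left_comm, hd, mul_one]

include B in
lemma exists_dvd_sub_pow_of_mem_jacobson (hp : p.Prime) (hc : IsUnit (algebraMap X B c))
    (hcJ : c ∈ (⊥ : Ideal X).jacobson) (hcp : (c ^ p) ^ 2 ∣ (p : X))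
    (hroot : ∀ t : Xˣ, ∃ s : X, s ^ p = t) (x : X) : ∃ y, c ^ p ∣ x - y ^ p := by
  obtain ⟨d, hd⟩ := hcp
  have hunit : IsUnit (c ^ p * x + 1) :=
    Ideal.mem_jacobson_bot.1 (Ideal.pow_mem_of_mem _ hcJ p hp.pos) x
  obtain ⟨s, hs⟩ := hroot hunit.unit
  obtain ⟨r, hr⟩ := exists_add_pow_prime_eq hp (s - 1) 1
  rw [sub_add_cancel, hs, hunit.unit_spec, one_pow, hd] at hr
  have hdvd : c ^ p ∣ (s - 1) ^ p := ⟨x - c ^ p * d * (s - 1) * r, by linear_combination -hr⟩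
  obtain ⟨y, hy⟩ := dvd_of_pow_dvd_pow_of_isIntegrallyClosedIn hp.ne_zero hc hdvd
  have hreg : IsLeftRegular (c ^ p) := fun a b hab =>
    IsIntegralClosure.algebraMap_injective X X B <| ((hc.pow p).mul_left_cancel <| by
      simpa only [map_mul, map_pow] using congrArg (algebraMap X B) hab)
  refine ⟨y, d * (s - 1) * r, hreg ?_⟩
  rw [hy] at hr ⊢
  linear_combination hr

end Frobenius

namespace GoodTower

variable {R : Type u} [CommRing R] {p : ℕ} {P : AlgPack R}

lemma isIntegralClosure (hP : GoodTower p P) :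
    IsIntegralClosure P.X R (Localization.Away (algebraMap R P.X p)) :=
  ⟨hP.2.1.1, fun {x} => hP.2.1.2 x⟩

lemma algebra_isIntegral (hP : GoodTower p P) : Algebra.IsIntegral R P.X :=
  have := hP.isIntegralClosure
  IsIntegralClosure.isIntegral_algebra R (Localization.Away (algebraMap R P.X p))

lemma isIntegrallyClosedIn (hP : GoodTower p P) :
    IsIntegrallyClosedIn P.X (Localization.Away (algebraMap R P.X p)) :=
  have := hP.isIntegralClosure
  .of_isIntegralClosure R

lemma dvd_of_dvd_pow (hP : GoodTower p P) (hp : p ≠ 0) {q : P.X}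
    (hq : Associated (p : P.X) (q ^ p ^ 2)) {x : P.X} (hx : (p : P.X) ∣ x ^ p) : q ^ p ∣ x := by
  have := hP.isIntegrallyClosedIn
  have hqp : q ^ p ∣ (p : P.X) := (pow_dvd_pow q (Nat.le_self_pow two_ne_zero p)).trans hq.symm.dvd
  have hunit : IsUnit (algebraMap P.X (Localization.Away (algebraMap R P.X p)) (q ^ p)) :=
    IsLocalization.Away.isUnit_of_dvd (algebraMap R P.X p) (by rwa [map_natCast])
  refine dvd_of_pow_dvd_pow_of_isIntegrallyClosedIn hp hunit ?_
  rw [← pow_mul, ← sq]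
  exact hq.symm.dvd.trans hx

lemma exists_dvd_sub_pow (hP : GoodTower p P) (hp : p.Prime)
    (hpJ : (p : R) ∈ (⊥ : Ideal R).jacobson) {q : P.X}
    (hq : Associated (p : P.X) (q ^ p ^ 2)) (x : P.X) : ∃ y, (p : P.X) ∣ x - y ^ p := by
  have := hP.isIntegrallyClosedIn
  have := hP.algebra_isIntegral
  have hqp : q ∣ (p : P.X) := (dvd_pow_self q (pow_ne_zero 2 hp.ne_zero)).trans hq.symm.dvd
  have hunit : IsUnit (algebraMap P.X (Localization.Away (algebraMap R P.X p)) q) :=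
    IsLocalization.Away.isUnit_of_dvd (algebraMap R P.X p) (by rwa [map_natCast])
  have hqJ : q ∈ (⊥ : Ideal P.X).jacobson := by
    have hpX := algebraMap_mem_jacobson_bot (X := P.X) hpJ
    rw [map_natCast] at hpX
    exact (⊥ : Ideal P.X).isRadical_jacobson ⟨_, Ideal.mem_of_dvd _ hq.dvd hpX⟩
  have hq2 : (q ^ p) ^ 2 ∣ (p : P.X) := by
    rw [← pow_mul]
    exact (pow_dvd_pow q (sq p ▸ Nat.mul_le_mul_left p hp.two_le)).trans hq.symm.dvd
  obtain ⟨y, z, hyz⟩ := exists_dvd_sub_pow_add_pow_mul hp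
    (exists_dvd_sub_pow_of_mem_jacobson hp hunit hqJ hq2 hP.2.2) p x
  rw [← pow_mul, ← sq, ← sub_sub] at hyz
  exact ⟨y, (dvd_sub_left (hq.dvd.mul_right z)).1 hyz⟩

end GoodTower

theorem exists_goodTower {p : ℕ} (hp : p ≠ 0) (R : Type u) [CommRing R] :
    ∃ P : AlgPack R, GoodTower p P := by
  let A := Localization.Away (p : R)
  let := ((algebraMap A (RootClosure p A)).comp (algebraMap R A)).toAlgebra
  have : IsScalarTower R A (RootClosure p A) := .of_algebraMap_eq' rfl
  have hpA : IsUnit (p : A) := by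
    simpa only [map_natCast] using IsLocalization.Away.algebraMap_isUnit (S := A) (p : R)
  exact ⟨_, goodTower_integralClosure hp (isIndFiniteEtaleCover_rootClosure hp hpA)
    rootClosure_exists_pow_eq⟩

theorem exists_pro_finite_etale_tower_general (p : ℕ) (hp : p ≠ 0) (R : Type u) [CommRing R] :
    (∃ P : AlgPack R, GoodTower p P) ∧
    (p.Prime → (p : R) ∈ (⊥ : Ideal R).jacobson →
      ∀ (p₂ : R) (v : Rˣ), (p : R) = v * p₂ ^ (p ^ 2) →
      ∀ P : AlgPack R, GoodTower p P →
        ((∀ x : P.X, (∃ y : P.X, x ^ p = (p : P.X) * y) →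
            ∃ z : P.X, x = algebraMap R P.X p₂ ^ p * z) ∧
         (∀ x : P.X, ∃ y z : P.X, x = y ^ p + (p : P.X) * z))) := by
  refine ⟨exists_goodTower hp R, fun hprime hpJ p₂ v hv P hP => ?_⟩
  have hq : Associated (p : P.X) (algebraMap R P.X p₂ ^ p ^ 2) := by
    rw [← map_natCast (algebraMap R P.X), hv, map_mul, map_pow]
    exact associated_unit_mul_left _ _ (v.isUnit.map _)
  refine ⟨fun x => hP.dvd_of_dvd_pow hp hq, fun x => ?_⟩
  obtain ⟨y, z, hz⟩ := hP.exists_dvd_sub_pow hprime hpJ hq x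
  exact ⟨y, z, sub_eq_iff_eq_add'.1 hz⟩

theorem exists_pro_finite_etale_tower (p : ℕ) (hp : p.Prime) (R : Type u) [CommRing R] :
    (∃ P : AlgPack R, GoodTower p P) ∧
    ((p : R) ∈ (⊥ : Ideal R).jacobson →
      ∀ (p₂ : R) (v : Rˣ), (p : R) = v * p₂ ^ (p ^ 2) →
      ∃ P : AlgPack R, GoodTower p P ∧
        -- (iv) the map `R_∞/p₁R_∞ → R_∞/pR_∞`, `x ↦ x^p` (with `p₁ = p₂^p`), is bijective
        ((∀ x : P.X, (∃ y : P.X, x ^ p = (p : P.X) * y) →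
            ∃ z : P.X, x = algebraMap R P.X p₂ ^ p * z) ∧
         (∀ x : P.X, ∃ y z : P.X, x = y ^ p + (p : P.X) * z))) :=
  have h := exists_pro_finite_etale_tower_general p hp.ne_zero R
  ⟨h.1, fun hpJ p₂ v hv => h.1.imp fun P hP => ⟨hP, h.2 hp hpJ p₂ v hv P hP⟩⟩
end

section
/- Let A be a valuation ring of height 1 (a valuation domain of Krull dimension 1) and let X be a scheme of finite type over Spec A. Then the underlying topological space of X is a Noetherian topological space. -/
/-!
STATEMENT 18: Let `A` be a valuation ring of height `1` and `X` a scheme of finite type over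
`Spec A`.  Then the underlying topological space of `X` is Noetherian.
-/

open AlgebraicGeometry CategoryTheory

universe u

/-!
Although `A` need not be a Noetherian ring, `Spec A` has only two points. Hence `X` is the union of
two fibres, each of finite type over a residue field and therefore Noetherian; topologically, a
finite union of Noetherian subspaces is Noetherian, no matter how the pieces are glued.
-/

open TopologicalSpace

theorem noetherianSpace_of_noetherianSpace_preimage_singleton {α ι : Type*} [TopologicalSpace α]
    [Finite ι] (f : α → ι) (hf : ∀ i, NoetherianSpace (f ⁻¹' {i})) : NoetherianSpace α := by
  have hcover : ⋃ i, f ⁻¹' {i} = Set.univ := by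
    rw [← Set.preimage_iUnion, Set.iUnion_of_singleton, Set.preimage_univ]
  rw [← noetherian_univ_iff, ← hcover]
  exact NoetherianSpace.iUnion fun i => f ⁻¹' {i}

theorem finite_primeSpectrum_of_ringKrullDim_le_one {A : Type*} [CommRing A] [IsDomain A]
    [IsLocalRing A] (hA : ringKrullDim A ≤ 1) : Finite (PrimeSpectrum A) := by
  have : Ring.KrullDimLE 1 A := Ring.krullDimLE_iff.mpr hA
  exact Set.finite_univ_iff.mp <| (Set.toFinite {⊥, ⊤}).subset fun p _ =>
    IsLocalRing.Ring.KrullDimLE.eq_bot_or_eq_top p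

section Fiber

variable {X Y : Scheme.{u}} (f : X ⟶ Y) [LocallyOfFiniteType f]

theorem isLocallyNoetherian_fiber (y : Y) : IsLocallyNoetherian (f.fiber y) :=
  inferInstanceAs (IsLocallyNoetherian (Limits.pullback f (Y.fromSpecResidueField y)))

theorem noetherianSpace_preimage_singleton [QuasiCompact f] (y : Y) :
    NoetherianSpace (f ⁻¹' {y}) := by
  have : IsNoetherian (f.fiber y) := { isLocallyNoetherian_fiber f y with }
  exact (noetherianSpace_iff_of_homeomorph (f.fiberHomeo y)).mp inferInstance

end Fiber

theorem noetherianSpace_of_finiteType_over_valuationRing_general {X Y : Scheme.{u}} [Finite Y]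
    (f : X ⟶ Y) [LocallyOfFiniteType f] [QuasiCompact f] : NoetherianSpace X :=
  noetherianSpace_of_noetherianSpace_preimage_singleton f (noetherianSpace_preimage_singleton f)

theorem noetherianSpace_of_finiteType_over_valuationRing
    (A : Type u) [CommRing A] [IsDomain A] [ValuationRing A]
    (hA : ringKrullDim A = 1)
    (X : Scheme.{u}) (f : X ⟶ Spec (CommRingCat.of A))
    [LocallyOfFiniteType f] [QuasiCompact f] :
    TopologicalSpace.NoetherianSpace X := by
  have : Finite (Spec (CommRingCat.of A)) := finite_primeSpectrum_of_ringKrullDim_le_one hA.le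
  exact noetherianSpace_of_finiteType_over_valuationRing_general f
end
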